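/- Let V be a commutative ring and m ⊆ V an ideal satisfying m·m = m such that m̃ = m ⊗_V m is a flat V-module, and let R be a commutative V-algebra. Then: (i) for all R-modules M and N, the natural map (m̃ ⊗_V M) ⊗_R (m̃ ⊗_V N) → m̃ ⊗_V (M ⊗_R N), induced on elementary tensors by ((x ⊗ y) ⊗ s) ⊗ ((x' ⊗ y') ⊗ t) ↦ (x x' ⊗ y y') ⊗ (s ⊗ t), is an isomorphism; (ii) if M is an almost flat R-module, then m̃ ⊗_V M is a flat R-module. -/

import Mathlib

universe u v

open scoped TensorProduct
open CategoryTheory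

set_option maxHeartbeats 1000000
set_option synthInstance.maxHeartbeats 200000

section

variable (V : Type v) [CommRing V] (m : Ideal V)

/-- Multiplication `m × m → m` of elements of the ideal `m`. -/
def idealMulBilin : (m : Type v) →ₗ[V] (m : Type v) →ₗ[V] (m : Type v) :=
  LinearMap.mk₂ V (fun x y => (⟨(x : V) * (y : V), Ideal.mul_mem_left m _ y.2⟩ : m))
    (fun x x' y => Subtype.ext (by push_cast; ring))
    (fun c x y => Subtype.ext (by push_cast [smul_eq_mul]; ring))
    (fun x y y' => Subtype.ext (by push_cast; ring))
    (fun c x y => Subtype.ext (by push_cast [smul_eq_mul]; ring))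

/-- The multiplication map `m̃ ⊗_V m̃ → m̃`, `(x ⊗ y) ⊗ (x' ⊗ y') ↦ (x x') ⊗ (y y')`. -/
noncomputable def tildeMul :
    (TensorProduct V m m) ⊗[V] (TensorProduct V m m) →ₗ[V] TensorProduct V m m :=
  (TensorProduct.map (TensorProduct.lift (idealMulBilin V m))
      (TensorProduct.lift (idealMulBilin V m))).comp
    (TensorProduct.tensorTensorTensorComm V m m m m).toLinearMap

variable (R : Type u) [CommRing R] [Algebra V R]
variable (M : Type u) [AddCommGroup M] [Module V M] [Module R M] [IsScalarTower V R M]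

/-- The `R`-module structure on `m̃ ⊗_V M` induced by the `R`-action on the second
factor. -/
noncomputable instance (priority := 100) tildeTensorModule :
    Module R (TensorProduct V (TensorProduct V m m) M) where
  smul r x :=
    LinearMap.lTensor (TensorProduct V m m) ((LinearMap.lsmul R M r).restrictScalars V) x
  one_smul x := by
    show LinearMap.lTensor (TensorProduct V m m)
      ((LinearMap.lsmul R M 1).restrictScalars V) x = x
    have h : (LinearMap.lsmul R M 1).restrictScalars V = LinearMap.id := by ext; simp
    rw [h, LinearMap.lTensor_id, LinearMap.id_apply]
  mul_smul r s x := by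
    have h : (LinearMap.lsmul R M (r * s)).restrictScalars V =
        ((LinearMap.lsmul R M r).restrictScalars V).comp
          ((LinearMap.lsmul R M s).restrictScalars V) := by
      ext y
      show (r * s) • y = r • s • y
      rw [mul_smul]
    show LinearMap.lTensor (TensorProduct V m m)
        ((LinearMap.lsmul R M (r * s)).restrictScalars V) x = _
    rw [h, LinearMap.lTensor_comp]
    rfl
  smul_zero r := map_zero _
  smul_add r x y := map_add _ x y
  add_smul r s x := by
    have h : (LinearMap.lsmul R M (r + s)).restrictScalars V =
        (LinearMap.lsmul R M r).restrictScalars V +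
          (LinearMap.lsmul R M s).restrictScalars V := by
      ext y; simp [add_smul]
    show LinearMap.lTensor (TensorProduct V m m)
        ((LinearMap.lsmul R M (r + s)).restrictScalars V) x = _
    rw [h, LinearMap.lTensor_add]
    rfl
  zero_smul x := by
    show LinearMap.lTensor (TensorProduct V m m)
      ((LinearMap.lsmul R M 0).restrictScalars V) x = 0
    have h : (LinearMap.lsmul R M 0).restrictScalars V = 0 := by ext; simp
    rw [h, LinearMap.lTensor_zero, LinearMap.zero_apply]

variable (N : Type u) [AddCommGroup N] [Module V N] [Module R N] [IsScalarTower V R N]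

instance : SMulCommClass R V M := SMulCommClass.symm V R M
instance : SMulCommClass R V N := SMulCommClass.symm V R N

/-- The canonical map `M ⊗_V N → M ⊗_R N`. -/
noncomputable def baseChangeTensor : (M ⊗[V] N) →ₗ[V] (M ⊗[R] N) :=
  TensorProduct.lift
    (LinearMap.mk₂ V (fun s t => s ⊗ₜ[R] t)
      (fun s s' t => TensorProduct.add_tmul s s' t)
      (fun c s t => (TensorProduct.smul_tmul' c s t).symm)
      (fun s t t' => TensorProduct.tmul_add s t t')
      (fun c s t => by
        show s ⊗ₜ[R] (c • t) = c • (s ⊗ₜ[R] t)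
        rw [TensorProduct.smul_tmul', algebra_compatible_smul R c t,
          algebra_compatible_smul R c s]
        exact (TensorProduct.smul_tmul _ _ _).symm))

/-- The canonical `V`-bilinear map
`(m̃ ⊗_V M) × (m̃ ⊗_V N) → m̃ ⊗_V (M ⊗_R N)`,
`((x ⊗ y) ⊗ s, (x' ⊗ y') ⊗ t) ↦ (x x' ⊗ y y') ⊗ (s ⊗ t)`. -/
noncomputable def tildeTensorMulBilin :
    (TensorProduct V (TensorProduct V m m) M) →ₗ[V]
      (TensorProduct V (TensorProduct V m m) N) →ₗ[V]
        TensorProduct V (TensorProduct V m m) (M ⊗[R] N) :=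
  TensorProduct.curry
    ((TensorProduct.map (tildeMul V m) (baseChangeTensor V R M N)).comp
      (TensorProduct.tensorTensorTensorComm V (TensorProduct V m m) M
        (TensorProduct V m m) N).toLinearMap)

/-- The canonical additive map
`(m̃ ⊗_V M) ⊗_R (m̃ ⊗_V N) → m̃ ⊗_V (M ⊗_R N)` induced on elementary tensors by
`((x ⊗ y) ⊗ s) ⊗ ((x' ⊗ y') ⊗ t) ↦ (x x' ⊗ y y') ⊗ (s ⊗ t)`. -/
noncomputable def tildeTensorMul :
    ((TensorProduct V (TensorProduct V m m) M) ⊗[R]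
        (TensorProduct V (TensorProduct V m m) N)) →+
      TensorProduct V (TensorProduct V m m) (M ⊗[R] N) :=
  TensorProduct.liftAddHom
    { toFun := fun x => (tildeTensorMulBilin V m R M N x).toAddMonoidHom
      map_zero' := by ext t; simp
      map_add' := fun x y => by ext t; simp }
    (by
      intro r x y
      show tildeTensorMulBilin V m R M N
          (LinearMap.lTensor (TensorProduct V m m)
            ((LinearMap.lsmul R M r).restrictScalars V) x) y =
        tildeTensorMulBilin V m R M N x
          (LinearMap.lTensor (TensorProduct V m m)
            ((LinearMap.lsmul R N r).restrictScalars V) y)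
      induction x using TensorProduct.induction_on with
      | zero => simp
      | tmul k s =>
        induction y using TensorProduct.induction_on with
        | zero => simp
        | tmul k' t =>
          show tildeTensorMulBilin V m R M N (k ⊗ₜ[V] (r • s)) (k' ⊗ₜ[V] t) =
            tildeTensorMulBilin V m R M N (k ⊗ₜ[V] s) (k' ⊗ₜ[V] (r • t))
          simp only [tildeTensorMulBilin, TensorProduct.curry_apply,
            LinearMap.comp_apply, LinearEquiv.coe_coe,
            TensorProduct.tensorTensorTensorComm_tmul, TensorProduct.map_tmul,
            baseChangeTensor, TensorProduct.lift.tmul, LinearMap.mk₂_apply]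
          rw [TensorProduct.smul_tmul]
        | add y1 y2 h1 h2 => simp only [map_add, LinearMap.map_add, h1, h2]
      | add x1 x2 h1 h2 =>
        simp only [map_add, LinearMap.map_add, LinearMap.add_apply, h1, h2])

/-- Almost flat module: `m·Tor_1^R(M, N) = 0` for all `N`. -/
def IsAlmostFlat (M' : Type u) [AddCommGroup M'] [Module R M'] : Prop :=
  ∀ P : ModuleCat.{u} R, ∀ a ∈ m,
    ∀ x : ((Tor (ModuleCat.{u} R) 1).obj (ModuleCat.of R M')).obj P,
      algebraMap V R a • x = 0

lemma tor_kill {R : Type u} [CommRing R] (a : R) (M : Type u) [AddCommGroup M] [Module R M]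
    (P : ModuleCat.{u} R)
    (h : ∀ x : ((Tor (ModuleCat.{u} R) 1).obj (ModuleCat.of R M)).obj P, a • x = 0)
    (Q : ProjectiveResolution P) (w : M ⊗[R] (Q.complex.X 1))
    (hw : LinearMap.lTensor M (Q.complex.d 1 0).hom w = 0) :
    ∃ z : M ⊗[R] (Q.complex.X 2), LinearMap.lTensor M (Q.complex.d 2 1).hom z = a • w := by
  let F := (MonoidalCategory.tensoringLeft (ModuleCat.{u} R)).obj (ModuleCat.of R M)
  let K := (F.mapHomologicalComplex (ComplexShape.down ℕ)).obj Q.complex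
  let S := K.sc' 2 1 0
  let e : S.moduleCatLeftHomologyData.H ≅
      ((Tor (ModuleCat.{u} R) 1).obj (ModuleCat.of R M)).obj P :=
    S.moduleCatHomologyIso.symm ≪≫
      (ShortComplex.homologyMapIso (K.isoSc' 2 1 0 (by simp) (by simp))).symm ≪≫
      (Q.isoLeftDerivedObj F 1).symm
  have h1 : ∀ x : S.moduleCatLeftHomologyData.H, a • x = 0 := by
    intro x
    have h2 : e.hom.hom (a • x) = 0 := by
      rw [map_smul]; exact h _
    have h3 : e.inv.hom (e.hom.hom (a • x)) = a • x := by
      rw [← LinearMap.comp_apply, ← ModuleCat.hom_comp, e.hom_inv_id]; rfl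
    rw [← h3, h2, map_zero]
  let w' : LinearMap.ker S.g.hom := ⟨w, hw⟩
  have h4 : Submodule.Quotient.mk (p := LinearMap.range S.moduleCatToCycles) (a • w') = 0 :=
    h1 (Submodule.Quotient.mk w')
  rw [Submodule.Quotient.mk_eq_zero] at h4
  obtain ⟨z, hz⟩ := h4
  exact ⟨z, congrArg Subtype.val hz⟩

lemma ker_kill {R : Type u} [CommRing R] (a : R) (M : Type u) [AddCommGroup M] [Module R M]
    (h : ∀ P : ModuleCat.{u} R,
      ∀ x : ((Tor (ModuleCat.{u} R) 1).obj (ModuleCat.of R M)).obj P, a • x = 0)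
    (I : Ideal R) (z : M ⊗[R] I) (hz : LinearMap.lTensor M I.subtype z = 0) : a • z = 0 := by
  let P : ModuleCat.{u} R := ModuleCat.of R (R ⧸ I)
  let Q : ProjectiveResolution P := projectiveResolution P
  let d1 := (Q.complex.d 1 0).hom
  let d2 := (Q.complex.d 2 1).hom
  let p : Q.complex.X 0 →ₗ[R] (R ⧸ I) := (Q.π.f 0).hom
  have hp : Function.Surjective p := by
    have : Epi (Q.π.f 0) := inferInstance
    exact (ModuleCat.epi_iff_surjective _).1 this
  have hex : Function.Exact d1 p :=
    (ShortComplex.ShortExact.moduleCat_exact_iff_function_exact _).1 Q.exact₀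
  have hex2 : Function.Exact d2 d1 :=
    (ShortComplex.ShortExact.moduleCat_exact_iff_function_exact _).1 (Q.exact_succ 0)
  have hproj : Module.Projective R (Q.complex.X 0) :=
    (IsProjective.iff_projective (Q.complex.X 0)).2 (Q.projective 0)
  obtain ⟨β, hβ⟩ := Module.projective_lifting_property I.mkQ p I.mkQ_surjective
  obtain ⟨α, hα⟩ := Module.projective_lifting_property p I.mkQ hp
  have hβ' : ∀ x, I.mkQ (β x) = p x := fun x => LinearMap.congr_fun hβ x
  have hα' : ∀ x, p (α x) = I.mkQ x := fun x => LinearMap.congr_fun hα x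
  -- the maps into `K = ker p`
  let K := LinearMap.ker p
  have hd1 : ∀ x, d1 x ∈ K := fun x => (hex _).2 ⟨x, rfl⟩
  let d1' : Q.complex.X 1 →ₗ[R] K := d1.codRestrict K hd1
  have hd1' : Function.Surjective d1' := by
    rintro ⟨y, hy⟩
    obtain ⟨x, hx⟩ := (hex y).1 hy
    exact ⟨x, Subtype.ext hx⟩
  have hex2' : Function.Exact d2 d1' := by
    intro x
    rw [← hex2 x]
    exact ⟨fun h => congrArg Subtype.val h, fun h => Subtype.ext h⟩
  let α' : I →ₗ[R] K := (α ∘ₗ I.subtype).codRestrict K (fun x => by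
    show p (α x) = 0
    rw [hα']; exact (Submodule.Quotient.mk_eq_zero I).2 x.2)
  let β' : K →ₗ[R] I := (β ∘ₗ K.subtype).codRestrict I (fun x => by
    have h1 : I.mkQ (β x) = 0 := by rw [hβ']; exact x.2
    exact (Submodule.Quotient.mk_eq_zero I).1 h1)
  let γ : R →ₗ[R] I := (β ∘ₗ α - LinearMap.id).codRestrict I (fun x => by
    have h1 : I.mkQ (β (α x) - x) = 0 := by rw [map_sub, hβ', hα', sub_self]
    rw [Submodule.mkQ_apply, Submodule.Quotient.mk_eq_zero] at h1
    exact h1)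
  have hcomp : β' ∘ₗ α' = LinearMap.id + γ ∘ₗ I.subtype := by
    ext x
    show β (α x) = x + (β (α x) - x)
    ring
  have hz1 : LinearMap.lTensor M β' (LinearMap.lTensor M α' z) = z := by
    rw [← LinearMap.comp_apply, ← LinearMap.lTensor_comp, hcomp, LinearMap.lTensor_add,
      LinearMap.lTensor_comp, LinearMap.add_apply, LinearMap.comp_apply, hz, map_zero, add_zero,
      LinearMap.lTensor_id, LinearMap.id_apply]
  obtain ⟨w, hw⟩ := LinearMap.lTensor_surjective M hd1' (LinearMap.lTensor M α' z)
  have hw0 : LinearMap.lTensor M d1 w = 0 := by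
    have e1 : d1 = K.subtype ∘ₗ d1' := rfl
    have e2 : K.subtype ∘ₗ α' = α ∘ₗ I.subtype := rfl
    rw [e1, LinearMap.lTensor_comp, LinearMap.comp_apply, hw, ← LinearMap.comp_apply,
      ← LinearMap.lTensor_comp, e2, LinearMap.lTensor_comp, LinearMap.comp_apply, hz, map_zero]
  obtain ⟨y, hy⟩ := tor_kill a M P (h P) Q w hw0
  have : LinearMap.lTensor M d1' (a • w) = 0 := by
    rw [← hy]
    exact (lTensor_exact M hex2' hd1' _).2 ⟨y, rfl⟩
  rw [← hz1, ← hw, ← map_smul, ← map_smul, this, map_zero]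

/-- Tensoring with `T` satisfying `m T = T` kills modules killed by `m`. -/
lemma lTensor_injective_of_ker_killed {V : Type*} [CommRing V] (m : Ideal V) (T : Type*)
    [AddCommGroup T] [Module V T] (hT : m • (⊤ : Submodule V T) = ⊤)
    {A B : Type*} [AddCommGroup A] [Module V A] [AddCommGroup B] [Module V B]
    (f : A →ₗ[V] B) (hf : Function.Surjective f) (hk : ∀ a ∈ m, ∀ x, f x = 0 → a • x = 0) :
    Function.Injective (LinearMap.lTensor T f) := by
  have hex : Function.Exact (LinearMap.ker f).subtype f := by
    intro x
    simp
  rw [injective_iff_map_eq_zero]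
  intro x hx
  obtain ⟨y, rfl⟩ := (lTensor_exact T hex hf x).1 hx
  have hy : y = 0 := by
    induction y using TensorProduct.induction_on with
    | zero => rfl
    | add y1 y2 h1 h2 =>
      have hz : ∀ y, LinearMap.lTensor T f (LinearMap.lTensor T (LinearMap.ker f).subtype y) = 0 :=
        fun y => (lTensor_exact T hex hf _).2 ⟨y, rfl⟩
      rw [h1 (hz _), h2 (hz _), add_zero]
    | tmul t k =>
      have ht : t ∈ m • (⊤ : Submodule V T) := by rw [hT]; exact Submodule.mem_top
      refine Submodule.smul_induction_on (p := fun t => t ⊗ₜ[V] k = 0) ht ?_ ?_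
      · intro a ha t _
        rw [TensorProduct.smul_tmul, show a • k = 0 from Subtype.ext (hk a ha k k.2),
          TensorProduct.tmul_zero]
      · intro t1 t2 e1 e2
        rw [TensorProduct.add_tmul, e1, e2, add_zero]
  rw [hy, map_zero]

lemma ideal_smul_top {V : Type*} [CommRing V] (m : Ideal V) (hm : m * m = m) :
    m • (⊤ : Submodule V m) = ⊤ := by
  apply Submodule.map_injective_of_injective m.injective_subtype
  rw [Submodule.map_smul'', Submodule.map_top, Submodule.range_subtype]
  exact hm

lemma tilde_smul_top {V : Type*} [CommRing V] (m : Ideal V) (hm : m * m = m) :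
    m • (⊤ : Submodule V (m ⊗[V] m)) = ⊤ := by
  rw [eq_top_iff]
  rintro z -
  induction z using TensorProduct.induction_on with
  | zero => exact Submodule.zero_mem _
  | add x y hx hy => exact Submodule.add_mem _ hx hy
  | tmul x y =>
    have hx : x ∈ m • (⊤ : Submodule V m) := by
      rw [ideal_smul_top m hm]; exact Submodule.mem_top
    refine Submodule.smul_induction_on (p := fun x => x ⊗ₜ[V] y ∈ m • ⊤) hx ?_ ?_
    · intro a ha t _
      rw [← TensorProduct.smul_tmul']
      exact Submodule.smul_mem_smul ha Submodule.mem_top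
    · intro t1 t2 e1 e2
      rw [TensorProduct.add_tmul]
      exact Submodule.add_mem _ e1 e2

lemma mu_surjective {V : Type v} [CommRing V] (m : Ideal V) (hm : m * m = m) :
    Function.Surjective (TensorProduct.lift (idealMulBilin V m)) := by
  intro x
  have hx : x ∈ m • (⊤ : Submodule V m) := by
      rw [ideal_smul_top m hm]; exact Submodule.mem_top
  rw [← LinearMap.mem_range]
  refine Submodule.smul_induction_on hx ?_ ?_
  · intro a ha t _
    exact ⟨⟨a, ha⟩ ⊗ₜ t, rfl⟩
  · intro t1 t2 e1 e2
    exact Submodule.add_mem _ e1 e2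

lemma mu_smul {V : Type v} [CommRing V] (m : Ideal V) (a : m) (z : m ⊗[V] m) :
    (a : V) • z = a ⊗ₜ[V] (TensorProduct.lift (idealMulBilin V m) z) := by
  induction z using TensorProduct.induction_on with
  | zero => simp
  | add x y hx hy => rw [smul_add, hx, hy, map_add, TensorProduct.tmul_add]
  | tmul x y =>
    have e1 : (a : V) • x = (x : V) • a := Subtype.ext (mul_comm _ _)
    rw [TensorProduct.smul_tmul', e1, TensorProduct.smul_tmul]
    rfl

lemma tildeMul_bijective {V : Type v} [CommRing V] (m : Ideal V) (hm : m * m = m) :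
    Function.Bijective (tildeMul V m) := by
  have hs := mu_surjective m hm
  have hk : ∀ a ∈ m, ∀ x, TensorProduct.lift (idealMulBilin V m) x = 0 → a • x = 0 := by
    intro a ha x hx
    rw [mu_smul m ⟨a, ha⟩ x, hx, TensorProduct.tmul_zero]
  have h1 := lTensor_injective_of_ker_killed m _ (tilde_smul_top m hm) _ hs hk
  have h2 := lTensor_injective_of_ker_killed m _ (ideal_smul_top m hm) _ hs hk
  rw [LinearMap.lTensor_inj_iff_rTensor_inj] at h2
  have e : TensorProduct.map (TensorProduct.lift (idealMulBilin V m))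
      (TensorProduct.lift (idealMulBilin V m)) =
      LinearMap.rTensor _ (TensorProduct.lift (idealMulBilin V m)) ∘ₗ
      LinearMap.lTensor _ (TensorProduct.lift (idealMulBilin V m)) :=
    (LinearMap.rTensor_comp_lTensor _ _ _).symm
  have hb : Function.Bijective (TensorProduct.map (TensorProduct.lift (idealMulBilin V m))
      (TensorProduct.lift (idealMulBilin V m))) := by
    rw [e]
    exact ⟨h2.comp h1, (LinearMap.rTensor_surjective _ hs).comp (LinearMap.lTensor_surjective _ hs)⟩
  exact hb.comp (TensorProduct.tensorTensorTensorComm V m m m m).bijective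

/-- The swap `m̃ ⊗ M ≃ M ⊗ m̃`, `R`-linearly. -/
noncomputable def tildeComm : (TensorProduct V (TensorProduct V m m) M) ≃ₗ[R]
    (M ⊗[V] (TensorProduct V m m)) :=
  { (TensorProduct.comm V (TensorProduct V m m) M).toAddEquiv with
    map_smul' := by
      intro r x
      show TensorProduct.comm V (TensorProduct V m m) M
        (LinearMap.lTensor (TensorProduct V m m) ((LinearMap.lsmul R M r).restrictScalars V) x) =
        r • TensorProduct.comm V (TensorProduct V m m) M x
      induction x using TensorProduct.induction_on with
      | zero => simp
      | add x y hx hy => rw [map_add, map_add, hx, hy, map_add, smul_add]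
      | tmul t s => rfl }

/-- Rearrangement of the source of `tildeTensorMul`. -/
noncomputable def srcEquiv :
    ((TensorProduct V (TensorProduct V m m) M) ⊗[R]
        (TensorProduct V (TensorProduct V m m) N)) ≃+
      (M ⊗[R] N) ⊗[V] ((TensorProduct V m m) ⊗[V] (TensorProduct V m m)) :=
  ((TensorProduct.congr (tildeComm V m R M) (tildeComm V m R N)).trans
    (TensorProduct.AlgebraTensorModule.tensorTensorTensorComm V V R R M
      (TensorProduct V m m) N (TensorProduct V m m))).toAddEquiv

lemma tildeTensorMul_eq (x) : tildeTensorMul V m R M N x =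
    TensorProduct.comm V _ _ (LinearMap.lTensor (M ⊗[R] N) (tildeMul V m)
      (srcEquiv V m R M N x)) := by
  induction x using TensorProduct.induction_on with
  | zero => simp
  | add x y hx hy => simp only [map_add, hx, hy]
  | tmul x y =>
    induction x using TensorProduct.induction_on with
    | zero => simp
    | add x y hx hy => simp only [map_add, TensorProduct.add_tmul, hx, hy]
    | tmul k s =>
      induction y using TensorProduct.induction_on with
      | zero => simp
      | add x y hx hy => simp only [map_add, TensorProduct.tmul_add, hx, hy]
      | tmul k' t => rfl

lemma tilde_flat (hm : m * m = m) (hflat : Module.Flat V (TensorProduct V m m))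
    (h : IsAlmostFlat V m R M) :
    Module.Flat R (TensorProduct V (TensorProduct V m m) M) := by
  suffices hh : Module.Flat R (M ⊗[V] (TensorProduct V m m)) from
    Module.Flat.of_linearEquiv (tildeComm V m R M)
  rw [Module.Flat.iff_lTensor_injective]
  intro I _
  have hkill : ∀ a ∈ m, ∀ x : M ⊗[R] I, LinearMap.lTensor M I.subtype x = 0 → a • x = 0 := by
    intro a ha x hx
    rw [algebra_compatible_smul R a x]
    exact ker_kill (algebraMap V R a) M (fun P => h P a ha) I x hx
  let f : M ⊗[R] I →ₗ[V] M ⊗[R] R := (LinearMap.lTensor M I.subtype).restrictScalars V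
  have hf : Function.Injective (LinearMap.lTensor (TensorProduct V m m) f) := by
    have e : f = (LinearMap.range f).subtype ∘ₗ f.rangeRestrict := rfl
    rw [e, LinearMap.lTensor_comp]
    refine Function.Injective.comp (g := LinearMap.lTensor (TensorProduct V m m)
      (LinearMap.range f).subtype) ?_ ?_
    · exact Module.Flat.lTensor_preserves_injective_linearMap _ (Submodule.injective_subtype _)
    · refine lTensor_injective_of_ker_killed m _ (tilde_smul_top m hm) _
        f.surjective_rangeRestrict ?_
      intro a ha x hx
      exact hkill a ha x (congrArg Subtype.val hx)
  rw [LinearMap.lTensor_inj_iff_rTensor_inj] at hf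
  let e1 := TensorProduct.AlgebraTensorModule.rightComm R V R M (TensorProduct V m m) I
  let e2 := TensorProduct.AlgebraTensorModule.rightComm R V R M (TensorProduct V m m) R
  have comm : ∀ x, e2 (LinearMap.lTensor (M ⊗[V] (TensorProduct V m m)) I.subtype x) =
      LinearMap.rTensor (TensorProduct V m m) f (e1 x) := by
    intro x
    induction x using TensorProduct.induction_on with
    | zero => simp
    | add x y hx hy => simp only [map_add, hx, hy]
    | tmul x y =>
      induction x using TensorProduct.induction_on with
      | zero => simp
      | add x y hx hy => simp only [map_add, TensorProduct.add_tmul, hx, hy]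
      | tmul k s => rfl
  intro x y hxy
  apply e1.injective
  apply hf
  rw [← comm, ← comm, hxy]

/-- Let `m·m = m` with `m̃ = m ⊗_V m` flat over `V`, and let `R` be a
commutative `V`-algebra.  Then:
(i) for all `R`-modules `M, N`, the natural map
`(m̃ ⊗_V M) ⊗_R (m̃ ⊗_V N) → m̃ ⊗_V (M ⊗_R N)` is an isomorphism;
(ii) if `M` is an almost flat `R`-module, then `m̃ ⊗_V M` is a flat `R`-module. -/
theorem tildeTensorMul_bijective_and_flat
    (hm : m * m = m) (hflat : Module.Flat V (TensorProduct V m m)) :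
    Function.Bijective (tildeTensorMul V m R M N) ∧
      (IsAlmostFlat V m R M →
        Module.Flat R (TensorProduct V (TensorProduct V m m) M)) := by
  refine ⟨?_, tilde_flat V m R M hm hflat⟩
  have e : (tildeTensorMul V m R M N : _ → _) = TensorProduct.comm V _ _ ∘
      LinearMap.lTensor (M ⊗[R] N) (tildeMul V m) ∘ srcEquiv V m R M N :=
    funext (tildeTensorMul_eq V m R M N)
  have hb : Function.Bijective (LinearMap.lTensor (M ⊗[R] N) (tildeMul V m)) :=
    (LinearEquiv.lTensor (M ⊗[R] N)
      (LinearEquiv.ofBijective _ (tildeMul_bijective m hm))).bijective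
  rw [e]
  exact (TensorProduct.comm V _ _).bijective.comp (hb.comp (srcEquiv V m R M N).bijective)

end
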